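/- Every compact Hausdorff locally connected space has the Bishop property (B). -/

import Mathlib

open Set Topology Filter

/-- `f ≺ g`: `f ≠ g` and `f` agrees with `g` on the support of `f` (the closure of
the set where `f` is nonzero). -/
def Prec {K : Type*} [TopologicalSpace K] (f g : C(K, ℝ)) : Prop :=
  f ≠ g ∧ ∀ t ∈ closure {t | f t ≠ 0}, f t = g t

/-- `f ≺_δ g`: `f ≺ g` and `‖f - g‖ ≥ δ`. -/
def PrecDelta {K : Type*} [TopologicalSpace K] [CompactSpace K] (δ : ℝ) (f g : C(K, ℝ)) : Prop :=
  Prec f g ∧ δ ≤ ‖f - g‖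

/-- `F` is a `δ`-`≺`-chain. -/
def IsPrecChain {K : Type*} [TopologicalSpace K] [CompactSpace K] (δ : ℝ)
    (F : Set C(K, ℝ)) : Prop :=
  ∀ f ∈ F, ∀ g ∈ F, f ≠ g → PrecDelta δ f g ∨ PrecDelta δ g f

/-- A compact Hausdorff space has the Bishop property (B) if for every `δ > 0`
every `δ`-`≺`-chain in `C(K)` is countable. -/
def HasBishop (K : Type*) [TopologicalSpace K] [CompactSpace K] [T2Space K] : Prop :=
  ∀ δ : ℝ, 0 < δ → ∀ F : Set C(K, ℝ), IsPrecChain δ F → F.Countable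

/-- The components of `{f ≠ 0}` on which `|f|` attains a value of at least `δ`. -/
def bigComponents {K : Type*} [TopologicalSpace K] (δ : ℝ) (f : C(K, ℝ)) : Set (Set K) :=
  (fun t => connectedComponentIn {s | f s ≠ 0} t) '' {t | δ ≤ |f t|}

theorem bigComponents_finite {K : Type*} [TopologicalSpace K] [CompactSpace K]
    [LocallyConnectedSpace K] {δ : ℝ} (hδ : 0 < δ) (f : C(K, ℝ)) :
    (bigComponents δ f).Finite := by
  have hclosed : IsClosed {t | δ ≤ |f t|} := isClosed_le continuous_const f.continuous.abs
  have hopen : IsOpen {t | f t ≠ 0} := isOpen_ne_fun f.continuous continuous_const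
  have hmem : ∀ t ∈ {t | δ ≤ |f t|}, t ∈ {s | f s ≠ 0} :=
    fun t ht => abs_pos.mp (hδ.trans_le ht)
  obtain ⟨s, -, hs⟩ := hclosed.isCompact.elim_nhds_subcover
    (fun t => connectedComponentIn {s | f s ≠ 0} t)
    (fun t ht => hopen.connectedComponentIn.mem_nhds (mem_connectedComponentIn (hmem t ht)))
  refine (s.finite_toSet.image (fun t => connectedComponentIn {s | f s ≠ 0} t)).subset ?_
  rintro _ ⟨t, ht, rfl⟩
  obtain ⟨x, hx, htx⟩ := mem_iUnion₂.mp (hs ht)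
  exact ⟨x, hx, connectedComponentIn_eq htx⟩

theorem Prec.eq_of_ne_zero {K : Type*} [TopologicalSpace K] {f g : C(K, ℝ)} (h : Prec f g)
    {t : K} (ht : f t ≠ 0) : f t = g t :=
  h.2 t (subset_closure ht)

theorem Prec.connectedComponentIn_eq {K : Type*} [TopologicalSpace K] {f g : C(K, ℝ)}
    (h : Prec f g) {t : K} (ht : f t ≠ 0) :
    connectedComponentIn {s | f s ≠ 0} t = connectedComponentIn {s | g s ≠ 0} t := by
  have hsub : {s | f s ≠ 0} ⊆ {s | g s ≠ 0} := fun s hs => by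
    simpa [← h.eq_of_ne_zero hs] using hs
  have htg : t ∈ connectedComponentIn {s | g s ≠ 0} t := mem_connectedComponentIn (hsub ht)
  refine (connectedComponentIn_mono t hsub).antisymm
    (isPreconnected_connectedComponentIn.subset_connectedComponentIn htg ?_)
  refine isPreconnected_connectedComponentIn.subset_left_of_subset_union
    (isOpen_ne_fun f.continuous continuous_const) (isOpen_ne_fun f.continuous g.continuous)
    (disjoint_left.mpr fun s hs hs' => hs' (h.eq_of_ne_zero hs)) (fun s hs => ?_) ⟨t, htg, ht⟩
  have hgs : g s ≠ 0 := connectedComponentIn_subset _ _ hs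
  by_cases hfs : f s = 0
  · exact Or.inr fun hfg => hgs (hfg ▸ hfs)
  · exact Or.inl hfs

theorem PrecDelta.bigComponents_ssubset {K : Type*} [TopologicalSpace K] [CompactSpace K]
    {δ : ℝ} (hδ : 0 < δ) {f g : C(K, ℝ)} (h : PrecDelta δ f g) :
    bigComponents δ f ⊂ bigComponents δ g := by
  refine ssubset_iff_subset_not_subset.mpr ⟨?_, fun hsub => ?_⟩
  · rintro _ ⟨t, ht, rfl⟩
    have hft : f t ≠ 0 := abs_pos.mp (hδ.trans_le ht)
    exact ⟨t, by simpa [← h.1.eq_of_ne_zero hft] using ht, (h.1.connectedComponentIn_eq hft).symm⟩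
  · obtain ⟨t, ht⟩ : ∃ t, δ ≤ |f t - g t| := by
      by_contra! hlt
      exact h.2.not_gt ((ContinuousMap.norm_lt_iff _ hδ).mpr hlt)
    have hft : f t = 0 := by
      by_contra hft
      rw [h.1.eq_of_ne_zero hft, sub_self, abs_zero] at ht
      exact ht.not_gt hδ
    have hgt : δ ≤ |g t| := by simpa [hft] using ht
    obtain ⟨s, -, hst⟩ := hsub ⟨t, hgt, rfl⟩
    have htg : t ∈ connectedComponentIn {s | g s ≠ 0} t :=
      mem_connectedComponentIn (abs_pos.mp (hδ.trans_le hgt))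
    exact connectedComponentIn_subset _ _ (hst.ge htg) hft

/-- Every compact Hausdorff locally connected space has the Bishop property (B). -/
theorem stmt11 (K : Type*) [TopologicalSpace K] [CompactSpace K] [T2Space K]
    [LocallyConnectedSpace K] : HasBishop K := by
  intro δ hδ F hF
  have hlt : ∀ {f g : C(K, ℝ)}, PrecDelta δ f g →
      (bigComponents δ f).ncard < (bigComponents δ g).ncard := fun h =>
    ncard_lt_ncard (h.bigComponents_ssubset hδ) (bigComponents_finite hδ _)
  have hinj : InjOn (fun f => (bigComponents δ f).ncard) F := by
    intro f hf g hg hfg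
    by_contra hne
    rcases hF f hf g hg hne with h | h
    · exact (hlt h).ne hfg
    · exact (hlt h).ne' hfg
  exact (mapsTo_univ _ F).countable_of_injOn hinj countable_univ
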